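/- Let A be a finite set of agents and B a finite set of items, and for each i ∈ A let B_i^1 ⊆ B (heavy items of interest to i) and B_i^ε ⊆ B (light items of interest to i) with B_i^1 ∩ B_i^ε = ∅ for the relevant item sets. Let k ≥ 1 be an integer and set r = ⌈k/3⌉. Suppose there are nonnegative reals x_{i,S}, indexed by agents i ∈ A and finite sets S ⊆ B, satisfying: (1) whenever x_{i,S} > 0, either S is a nonempty subset of B_i^1 or S ⊆ B_i^ε with |S| ≥ k; (2) Σ_S x_{i,S} ≥ 1 for every agent i ∈ A; (3) Σ_{(i,S) : j ∈ S} x_{i,S} ≤ 1 for every item j ∈ B. Then there exists a family (S_i)_{i∈A} of pairwise disjoint sets such that for every agent i ∈ A, either S_i consists of a single item of B_i^1, or S_i ⊆ B_i^ε with |S_i| = r. Equivalently, the hypergraph whose edges are the sets {i,j} for j ∈ B_i^1 with some heavy bundle mass, and the sets {i} ∪ S' for S' ⊆ S of size r with x_{i,S} > 0 light, has a perfect matching covering all agents. -/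

import Mathlib

open Finset

/-!
The proof is a weighted form of Haxell's matching theorem followed by linear programming duality.

Suppose `M` matches all agents of `D`, and `a₀ ∉ D` is to be matched as well. Grow a set `C` of
agents, starting from `{a₀}`, and a set `T` of items containing everything that has been touched.
As long as the weight of `T` is at most `q (|C| - 1)`, some agent of `C` has an edge `e` avoiding
`T`. If no edge of the matching meets `e`, the edge is free. Otherwise add to `C` the set `N` of
agents whose edges meet `e`, and to `T` all items of `e` and of these edges, of total weight at most
`q |N|`. Once an edge avoiding `T` is free for some agent of `N`, giving it to that agent leaves `e`
with fewer obstacles, so that after finitely many such exchanges an edge of `a₀` is free.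

For bundles, give weight `q = 2r - 1` to a heavy item and `1` to a light item. A light edge `e`
shares an item with each of the `n ≥ 1` edges that meet it, whence a total weight of at most
`r (n + 1) - 1 ≤ q n`. If `T` met all the edges of the agents of `C`, then every bundle used by the
fractional assignment at an agent of `C` would have weight at least `q` inside `T`, since
`k - (r - 1) ≥ 2r - 1`, and the covering and packing constraints would give `q |C|` as a lower
bound for the weight of `T`.
-/

section Haxell

variable {A B : Type*}

/-- A choice `M` of pairwise disjoint edges for the agents in `D`, where `E a e` says that `e` is
the set of items of an edge at the agent `a`. The values of `M` outside `D` are irrelevant. -/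
structure IsMatchingOn (E : A → Finset B → Prop) (D : Finset A) (M : A → Finset B) : Prop where
  isEdge : ∀ a ∈ D, E a (M a)
  pairwiseDisjoint : (D : Set A).PairwiseDisjoint M

theorem IsMatchingOn.mono {E : A → Finset B → Prop} {D D' : Finset A} {M : A → Finset B}
    (hM : IsMatchingOn E D M) (h : D' ⊆ D) : IsMatchingOn E D' M :=
  ⟨fun a ha => hM.isEdge a (h ha), hM.pairwiseDisjoint.subset (coe_subset.2 h)⟩

theorem IsMatchingOn.update_insert [DecidableEq A] {E : A → Finset B → Prop} {D : Finset A}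
    {M : A → Finset B} (hM : IsMatchingOn E D M) {a : A} {e : Finset B}
    (he : E a e) (hdisj : ∀ b ∈ D, b ≠ a → Disjoint (M b) e) :
    IsMatchingOn E (insert a D) (Function.update M a e) := by
  constructor
  · intro b hb
    rcases eq_or_ne b a with rfl | hba
    · rwa [Function.update_self]
    · rw [Function.update_of_ne hba]
      exact hM.isEdge b (mem_of_mem_insert_of_ne hb hba)
  · intro b hb c hc hbc
    rw [Function.onFun]
    have mem_D : ∀ {d}, d ∈ (insert a D : Finset A) → d ≠ a → d ∈ D := mem_of_mem_insert_of_ne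
    rcases eq_or_ne b a with rfl | hba
    · rw [Function.update_self, Function.update_of_ne hbc.symm]
      exact (hdisj c (mem_D hc hbc.symm) hbc.symm).symm
    rcases eq_or_ne c a with rfl | hca
    · rw [Function.update_self, Function.update_of_ne hbc]
      exact hdisj b (mem_D hb hbc) hbc
    · rw [Function.update_of_ne hba, Function.update_of_ne hca]
      exact hM.pairwiseDisjoint (mem_D hb hba) (mem_D hc hca) hbc

/-- `M'` arises from `M` by giving agents of `D \ C` other edges, all of them disjoint from `T`.
These are the changes of a matching that preserve the stage `(C, T)` of Haxell's search. -/
def Reroutes (D C : Finset A) (T : Finset B) (M M' : A → Finset B) : Prop :=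
  ∀ b ∈ D, M' b = M b ∨ (b ∉ C ∧ Disjoint (M' b) T)

namespace Reroutes

variable {D C C' : Finset A} {T T' : Finset B} {M M' M'' : A → Finset B}

theorem refl (D C : Finset A) (T : Finset B) (M : A → Finset B) : Reroutes D C T M M :=
  fun _ _ => Or.inl rfl

theorem trans (h : Reroutes D C T M M') (h' : Reroutes D C T M' M'') : Reroutes D C T M M'' := by
  intro b hb
  rcases h' b hb with heq | hnew
  · rw [heq]
    exact h b hb
  · exact Or.inr hnew

theorem mono (h : Reroutes D C' T' M M') (hC : C ⊆ C') (hT : T ⊆ T') : Reroutes D C T M M' :=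
  fun b hb => (h b hb).imp_right fun ⟨hbC, hbT⟩ => ⟨fun hb => hbC (hC hb), hbT.mono_right hT⟩

theorem eq_of_mem (h : Reroutes D C T M M') {b : A} (hbD : b ∈ D) (hbC : b ∈ C) : M' b = M b :=
  (h b hbD).resolve_right fun hb => hb.1 hbC

theorem update [DecidableEq A] (h : Reroutes D C T M M') {a : A} {e : Finset B} (ha : a ∉ C)
    (he : Disjoint e T) : Reroutes D C T M (Function.update M' a e) := by
  intro b hb
  rcases eq_or_ne b a with rfl | hba
  · exact Or.inr ⟨ha, by rwa [Function.update_self]⟩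
  · rw [Function.update_of_ne hba]
    exact h b hb

end Reroutes

variable [DecidableEq B]

/-- The agents of `D` whose edges in `M` prevent the edge `e` from being added to `M`. -/
def blockers (D : Finset A) (M : A → Finset B) (e : Finset B) : Finset A :=
  {b ∈ D | ¬ Disjoint (M b) e}

theorem mem_blockers {D : Finset A} {M : A → Finset B} {e : Finset B} {b : A} :
    b ∈ blockers D M e ↔ b ∈ D ∧ ¬ Disjoint (M b) e :=
  mem_filter

theorem blockers_subset (D : Finset A) (M : A → Finset B) (e : Finset B) : blockers D M e ⊆ D :=
  filter_subset _ _

theorem blockers_eq_empty_iff {D : Finset A} {M : A → Finset B} {e : Finset B} :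
    blockers D M e = ∅ ↔ ∀ b ∈ D, Disjoint (M b) e := by
  simp only [blockers, filter_eq_empty_iff, not_not]

theorem disjoint_blockers {D C : Finset A} {M : A → Finset B} {e T : Finset B}
    (hMT : ∀ b ∈ D, b ∈ C → M b ⊆ T) (heT : Disjoint e T) : Disjoint C (blockers D M e) := by
  refine disjoint_left.2 fun b hbC hb => ?_
  obtain ⟨hbD, hbe⟩ := mem_blockers.1 hb
  exact hbe (heT.symm.mono_left (hMT b hbD hbC))

theorem blockers_update_ssubset [DecidableEq A] {D C : Finset A} {T e e' : Finset B}
    {M M' : A → Finset B} {a : A} (h : Reroutes D C T M M') (heT : e ⊆ T)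
    (ha : a ∈ blockers D M e) (he' : Disjoint e' e) :
    blockers D (Function.update M' a e') e ⊂ blockers D M e := by
  refine (ssubset_iff_of_subset fun b hb => ?_).2 ⟨a, ha, fun h => ?_⟩
  · obtain ⟨hbD, hbe⟩ := mem_blockers.1 hb
    rcases eq_or_ne b a with rfl | hba
    · exact ha
    rw [Function.update_of_ne hba] at hbe
    rcases h b hbD with heq | ⟨-, hbT⟩
    · exact mem_blockers.2 ⟨hbD, heq ▸ hbe⟩
    · exact absurd (hbT.mono_right heT) hbe
  · exact (mem_blockers.1 h).2 (by rwa [Function.update_self])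

theorem card_sdiff_union_lt_card_sdiff [DecidableEq A] {C D N : Finset A} (hN : N.Nonempty)
    (hND : N ⊆ D) (hCN : Disjoint C N) : #(D \ (C ∪ N)) < #(D \ C) := by
  rw [sdiff_union_distrib, ← inter_sdiff_assoc, inter_eq_left.2 sdiff_subset]
  exact card_lt_card (sdiff_ssubset (subset_sdiff.2 ⟨hND, hCN.symm⟩) hN)

variable {R : Type*} [AddCommMonoid R] [PartialOrder R] [IsOrderedAddMonoid R]
  {w : Finset B → R} {q : R}

theorem weight_union_add_le [DecidableEq A] (hw_union : ∀ S T, w (S ∪ T) ≤ w S + w T)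
    {C N : Finset A} {T U : Finset B} (hCN : Disjoint C N) (hT : w T + q ≤ #C • q)
    (hU : w U ≤ #N • q) : w (T ∪ U) + q ≤ #(C ∪ N) • q := calc
  w (T ∪ U) + q ≤ w T + w U + q := by gcongr; exact hw_union T U
  _ = (w T + q) + w U := add_right_comm _ _ _
  _ ≤ #C • q + #N • q := add_le_add hT hU
  _ = #(C ∪ N) • q := by rw [card_union_of_disjoint hCN, add_nsmul]

variable {E : A → Finset B → Prop}

theorem IsMatchingOn.exists_reroutes_free_edge (hw_union : ∀ S T, w (S ∪ T) ≤ w S + w T)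
    (hw_blocked : ∀ M N a e, IsMatchingOn E N M → N.Nonempty → E a e →
      (∀ b ∈ N, ¬ Disjoint (M b) e) → w (e ∪ N.biUnion M) ≤ #N • q)
    (hw_avoid : ∀ C T, w T + q ≤ #C • q → ∃ a ∈ C, ∃ e, E a e ∧ Disjoint e T)
    {D C : Finset A} {T : Finset B} {M : A → Finset B} (hM : IsMatchingOn E D M)
    (hT : w T + q ≤ #C • q) (hMT : ∀ b ∈ D, b ∈ C → M b ⊆ T) :
    ∃ M', IsMatchingOn E D M' ∧ Reroutes D C T M M' ∧
      ∃ a ∈ C, ∃ e, E a e ∧ Disjoint e T ∧ ∀ b ∈ D, Disjoint (M' b) e := by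
  classical
  induction hm : #(D \ C) using Nat.strong_induction_on generalizing C T M with | _ m ih_C
  obtain ⟨a, ha, e, he, heT⟩ := hw_avoid C T hT
  induction hn : #(blockers D M e) using Nat.strong_induction_on generalizing M with | _ n ih_M
  set N := blockers D M e
  have hND : N ⊆ D := blockers_subset D M e
  rcases N.eq_empty_or_nonempty with hN_empty | hN_nonempty
  · exact ⟨M, hM, .refl D C T M, a, ha, e, he, heT, blockers_eq_empty_iff.1 hN_empty⟩
  have hCN : Disjoint C N := disjoint_blockers hMT heT
  have hT' : w (T ∪ (e ∪ N.biUnion M)) + q ≤ #(C ∪ N) • q := weight_union_add_le hw_union hCN hT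
    (hw_blocked M N a e (hM.mono hND) hN_nonempty he fun b hb => (mem_blockers.1 hb).2)
  have hMT' : ∀ b ∈ D, b ∈ C ∪ N → M b ⊆ T ∪ (e ∪ N.biUnion M) := by
    intro b hbD hb
    rcases mem_union.1 hb with hbC | hbN
    · exact (hMT b hbD hbC).trans subset_union_left
    · exact (subset_biUnion_of_mem M hbN).trans (subset_union_right.trans subset_union_right)
  obtain ⟨M', hM', hMM', a', ha', e', he', he'T', hfree⟩ :=
    ih_C _ (hm ▸ card_sdiff_union_lt_card_sdiff hN_nonempty hND hCN) hM hT' hMT' rfl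
  have hMM'_C : Reroutes D C T M M' := hMM'.mono subset_union_left subset_union_left
  obtain ⟨he'T, he'e, -⟩ : Disjoint e' T ∧ Disjoint e' e ∧ Disjoint e' (N.biUnion M) := by
    simpa only [disjoint_union_right] using he'T'
  rcases mem_union.1 ha' with ha'C | ha'N
  · exact ⟨M', hM', hMM'_C, a', ha'C, e', he', he'T, hfree⟩
  have hM'' : IsMatchingOn E D (Function.update M' a' e') := by
    simpa only [insert_eq_of_mem (hND ha'N)] using hM'.update_insert he' fun b hb _ => hfree b hb
  have hMM'' : Reroutes D C T M (Function.update M' a' e') :=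
    hMM'_C.update (disjoint_right.1 hCN ha'N) he'T
  have hfewer : #(blockers D (Function.update M' a' e') e) < n := hn ▸ card_lt_card
    (blockers_update_ssubset hMM' (subset_union_left.trans subset_union_right) ha'N he'e)
  obtain ⟨M₁, hM₁, hMM₁, hM₁_free⟩ :=
    ih_M _ hfewer hM'' (fun b hbD hbC => hMM''.eq_of_mem hbD hbC ▸ hMT b hbD hbC) rfl
  exact ⟨M₁, hM₁, hMM''.trans hMM₁, hM₁_free⟩

theorem exists_isMatchingOn (hw_empty : w ∅ ≤ 0) (hw_union : ∀ S T, w (S ∪ T) ≤ w S + w T)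
    (hw_blocked : ∀ M N a e, IsMatchingOn E N M → N.Nonempty → E a e →
      (∀ b ∈ N, ¬ Disjoint (M b) e) → w (e ∪ N.biUnion M) ≤ #N • q)
    (hw_avoid : ∀ C T, w T + q ≤ #C • q → ∃ a ∈ C, ∃ e, E a e ∧ Disjoint e T)
    (D : Finset A) : ∃ M, IsMatchingOn E D M := by
  classical
  induction D using Finset.induction_on with
  | empty => exact ⟨fun _ => ∅, by simp, by simp⟩
  | insert a₀ D ha₀ ih =>
    obtain ⟨M, hM⟩ := ih
    have hT : w ∅ + q ≤ #{a₀} • q := by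
      simpa only [card_singleton, one_nsmul, zero_add] using add_le_add_left hw_empty q
    have hMT : ∀ b ∈ D, b ∈ ({a₀} : Finset A) → M b ⊆ ∅ :=
      fun b hb hba => absurd (mem_singleton.1 hba ▸ hb) ha₀
    obtain ⟨M', hM', -, a, ha, e, he, -, hfree⟩ :=
      hM.exists_reroutes_free_edge hw_union hw_blocked hw_avoid hT hMT
    obtain rfl := mem_singleton.1 ha
    exact ⟨_, hM'.update_insert he fun b hb _ => hfree b hb⟩

end Haxell

section FractionalAssignment

variable {A B 𝕜 : Type*} [Fintype B] [DecidableEq B] [Semiring 𝕜]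

theorem sum_mul_sum_inter (y : Finset B → 𝕜) (v : B → 𝕜) (T : Finset B) :
    ∑ S, y S * ∑ j ∈ S ∩ T, v j = ∑ j ∈ T, (∑ S with j ∈ S, y S) * v j := by
  simp only [inter_comm _ T, ← sum_ite_mem T, mul_sum, mul_ite, mul_zero, sum_mul, sum_filter,
    ite_mul, zero_mul]
  exact sum_comm

variable [Fintype A] [PartialOrder 𝕜] [IsOrderedRing 𝕜] {x : A → Finset B → 𝕜}

theorem sum_sum_mul_sum_inter_le (hx : ∀ i S, 0 ≤ x i S)
    (hpack : ∀ j, ∑ i, ∑ S with j ∈ S, x i S ≤ 1)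
    {v : B → 𝕜} (hv : ∀ j, 0 ≤ v j) (C : Finset A) (T : Finset B) :
    ∑ i ∈ C, ∑ S, x i S * ∑ j ∈ S ∩ T, v j ≤ ∑ j ∈ T, v j := calc
  _ ≤ ∑ i, ∑ S, x i S * ∑ j ∈ S ∩ T, v j :=
    sum_le_univ_sum_of_nonneg fun i => sum_nonneg fun S _ =>
      mul_nonneg (hx i S) (sum_nonneg fun j _ => hv j)
  _ = ∑ j ∈ T, (∑ i, ∑ S with j ∈ S, x i S) * v j := by
    simp only [sum_mul_sum_inter, sum_mul _ _ (v _)]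
    exact sum_comm
  _ ≤ ∑ j ∈ T, v j := sum_le_sum fun j _ => mul_le_of_le_one_left (hv j) (hpack j)

theorem card_mul_le_sum_of_le_sum_inter (hx : ∀ i S, 0 ≤ x i S)
    (hpack : ∀ j, ∑ i, ∑ S with j ∈ S, x i S ≤ 1)
    {v : B → 𝕜} (hv : ∀ j, 0 ≤ v j) {c : 𝕜} (hc : 0 ≤ c) {C : Finset A} {T : Finset B}
    (hcov : ∀ i ∈ C, 1 ≤ ∑ S, x i S) (hcT : ∀ i ∈ C, ∀ S, 0 < x i S → c ≤ ∑ j ∈ S ∩ T, v j) :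
    #C * c ≤ ∑ j ∈ T, v j := by
  have hagent : ∀ i ∈ C, c ≤ ∑ S, x i S * ∑ j ∈ S ∩ T, v j := fun i hi => calc
    c ≤ (∑ S, x i S) * c := le_mul_of_one_le_left hc (hcov i hi)
    _ = ∑ S, x i S * c := sum_mul _ _ _
    _ ≤ ∑ S, x i S * ∑ j ∈ S ∩ T, v j := by
      refine sum_le_sum fun S _ => ?_
      rcases (hx i S).eq_or_lt with hzero | hpos
      · simp only [← hzero, zero_mul, le_refl]
      · exact mul_le_mul_of_nonneg_left (hcT i hi S hpos) hpos.le
  calc #C * c = ∑ _ ∈ C, c := by rw [sum_const, nsmul_eq_mul]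
    _ ≤ ∑ i ∈ C, ∑ S, x i S * ∑ j ∈ S ∩ T, v j := sum_le_sum hagent
    _ ≤ ∑ j ∈ T, v j := sum_sum_mul_sum_inter_le hx hpack hv C T

end FractionalAssignment

section Bundle

variable {A B : Type*} {B1 Bε : A → Finset B} {r : ℕ}

theorem card_union_biUnion_lt [DecidableEq B] {N : Finset A} {M : A → Finset B} {e : Finset B}
    (he : #e ≤ r) (hM : ∀ b ∈ N, #(M b) ≤ r) {a : A} (ha : a ∈ N)
    (hae : ¬ Disjoint (M a) e) : #(e ∪ N.biUnion M) < r * (#N + 1) := by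
  have hmeet : ¬ Disjoint e (N.biUnion M) := fun h =>
    hae (h.mono_right (subset_biUnion_of_mem M ha)).symm
  have hinter : 0 < #(e ∩ N.biUnion M) := card_pos.2 (not_disjoint_iff_nonempty_inter.1 hmeet)
  have hunion := card_union_add_card_inter e (N.biUnion M)
  have hbiUnion : #(N.biUnion M) ≤ #N * r := card_biUnion_le_card_mul N M r hM
  linarith

/-- The set `e` consists of one heavy item for agent `i`, or of `r` light items for agent `i`.
Equivalently, `{i} ∪ e` is an edge of the bundle hypergraph. -/
def IsBundle (B1 Bε : A → Finset B) (r : ℕ) (i : A) (e : Finset B) : Prop :=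
  (∃ j ∈ B1 i, e = {j}) ∨ (e ⊆ Bε i ∧ #e = r)

open Classical in
/-- The weight of an item in Haxell's condition for bundles, where an item counts as heavy if it is
heavy for some agent. The subtraction is meant for `0 < r`. -/
noncomputable def itemWeight (B1 : A → Finset B) (r : ℕ) (j : B) : ℕ :=
  if ∃ i, j ∈ B1 i then 2 * r - 1 else 1

theorem itemWeight_of_mem {i : A} {j : B} (hj : j ∈ B1 i) : itemWeight B1 r j = 2 * r - 1 :=
  if_pos ⟨i, hj⟩

theorem sum_itemWeight_eq_card {T : Finset B} (hT : ∀ i, Disjoint (B1 i) T) :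
    ∑ j ∈ T, itemWeight B1 r j = #T := by
  rw [card_eq_sum_ones]
  exact sum_congr rfl fun j hj => if_neg fun ⟨i, hji⟩ => disjoint_left.1 (hT i) hji hj

theorem IsBundle.eq_singleton_of_mem (hdisj : ∀ i i', Disjoint (B1 i) (Bε i')) {i i' : A}
    {e : Finset B} {j : B} (he : IsBundle B1 Bε r i e) (hj : j ∈ B1 i') (hje : j ∈ e) :
    e = {j} := by
  rcases he with ⟨j', -, rfl⟩ | ⟨heB, -⟩
  · rw [mem_singleton.1 hje]
  · exact absurd (heB hje) (disjoint_left.1 (hdisj i' i) hj)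

theorem IsBundle.subset_light_of_not_disjoint (hdisj : ∀ i i', Disjoint (B1 i) (Bε i')) {i i' : A}
    {e e' : Finset B} (he : IsBundle B1 Bε r i e) (he' : e' ⊆ Bε i') (hee' : ¬ Disjoint e e') :
    e ⊆ Bε i ∧ #e = r := by
  rcases he with ⟨j, hj, rfl⟩ | he
  · exact absurd ((hdisj i i').mono (singleton_subset_iff.2 hj) he') hee'
  · exact he

variable [DecidableEq B]

theorem sum_itemWeight_heavy_union_biUnion_le (hdisj : ∀ i i', Disjoint (B1 i) (Bε i'))
    {M : A → Finset B} {N : Finset A} (hM : ∀ b ∈ N, IsBundle B1 Bε r b (M b)) (hN : N.Nonempty)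
    {i : A} {j : B} (hj : j ∈ B1 i) (hjM : ∀ b ∈ N, j ∈ M b) :
    ∑ j' ∈ {j} ∪ N.biUnion M, itemWeight B1 r j' ≤ #N * (2 * r - 1) := by
  have hsub : {j} ∪ N.biUnion M ⊆ {j} := union_subset subset_rfl <| biUnion_subset.2 fun b hb =>
    ((hM b hb).eq_singleton_of_mem hdisj hj (hjM b hb)).subset
  calc ∑ j' ∈ {j} ∪ N.biUnion M, itemWeight B1 r j'
    _ ≤ ∑ j' ∈ {j}, itemWeight B1 r j' := sum_le_sum_of_subset hsub
    _ = 2 * r - 1 := by rw [sum_singleton, itemWeight_of_mem hj]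
    _ ≤ #N * (2 * r - 1) := Nat.le_mul_of_pos_left _ hN.card_pos

theorem sum_itemWeight_light_union_biUnion_le (hdisj : ∀ i i', Disjoint (B1 i) (Bε i'))
    {M : A → Finset B} {N : Finset A} (hM : ∀ b ∈ N, IsBundle B1 Bε r b (M b)) (hN : N.Nonempty)
    {i : A} {e : Finset B} (he : e ⊆ Bε i) (hcard : #e = r) (hNe : ∀ b ∈ N, ¬ Disjoint (M b) e) :
    ∑ j ∈ e ∪ N.biUnion M, itemWeight B1 r j ≤ #N * (2 * r - 1) := by
  have hMlight : ∀ b ∈ N, M b ⊆ Bε b ∧ #(M b) = r := fun b hb =>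
    (hM b hb).subset_light_of_not_disjoint hdisj he (hNe b hb)
  have hlight : ∀ i', Disjoint (B1 i') (e ∪ N.biUnion M) := fun i' =>
    disjoint_union_right.2 ⟨(hdisj i' i).mono_right he, (disjoint_biUnion_right _ _ _).2
      fun b hb => (hdisj i' b).mono_right (hMlight b hb).1⟩
  obtain ⟨a, ha⟩ := hN
  have hlt := card_union_biUnion_lt hcard.le (fun b hb => (hMlight b hb).2.le) ha (hNe a ha)
  rw [sum_itemWeight_eq_card hlight]
  obtain ⟨n, hn⟩ : ∃ n, #N = n + 1 := Nat.exists_eq_add_one.2 (card_pos.2 ⟨a, ha⟩)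
  obtain ⟨s, rfl⟩ : ∃ s, r = s + 1 := Nat.exists_eq_add_one.2 <| Nat.pos_of_mul_pos_right <|
    hlt.pos
  rw [hn] at hlt ⊢
  rw [show 2 * (s + 1) - 1 = 2 * s + 1 by omega]
  nlinarith

theorem sum_itemWeight_union_biUnion_le (hdisj : ∀ i i', Disjoint (B1 i) (Bε i'))
    {M : A → Finset B} {N : Finset A} (hM : ∀ b ∈ N, IsBundle B1 Bε r b (M b)) (hN : N.Nonempty)
    {i : A} {e : Finset B} (he : IsBundle B1 Bε r i e) (hNe : ∀ b ∈ N, ¬ Disjoint (M b) e) :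
    ∑ j ∈ e ∪ N.biUnion M, itemWeight B1 r j ≤ #N * (2 * r - 1) := by
  rcases he with ⟨j, hj, rfl⟩ | ⟨heB, hcard⟩
  · refine sum_itemWeight_heavy_union_biUnion_le hdisj hM hN hj fun b hb => ?_
    simpa only [disjoint_singleton_right, not_not] using hNe b hb
  · exact sum_itemWeight_light_union_biUnion_le hdisj hM hN heB hcard hNe

theorem two_mul_sub_one_le_sum_itemWeight_inter (hdisj : ∀ i i', Disjoint (B1 i) (Bε i')) {k : ℕ}
    (hrk : 3 * r ≤ k + 2) {i : A} {S T : Finset B}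
    (hS : (S ⊆ B1 i ∧ S.Nonempty) ∨ (S ⊆ Bε i ∧ k ≤ #S))
    (hT : ∀ e, IsBundle B1 Bε r i e → ¬ Disjoint e T) :
    2 * r - 1 ≤ ∑ j ∈ S ∩ T, itemWeight B1 r j := by
  rcases hS with ⟨hSB, j, hjS⟩ | ⟨hSB, hkS⟩
  · have hjT : j ∈ T := by
      simpa only [disjoint_singleton_left, not_not] using hT {j} (.inl ⟨j, hSB hjS, rfl⟩)
    rw [← itemWeight_of_mem (hSB hjS)]
    exact single_le_sum_of_canonicallyOrdered (mem_inter.2 ⟨hjS, hjT⟩)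
  · rw [sum_itemWeight_eq_card fun i' => (hdisj i' i).mono_right (inter_subset_left.trans hSB)]
    have hsdiff : #(S \ T) < r := by
      by_contra! hle
      obtain ⟨e, heS, hcard⟩ := exists_subset_card_eq hle
      exact hT e (.inr ⟨heS.trans (sdiff_subset.trans hSB), hcard⟩)
        (disjoint_sdiff_self_left.mono_left heS)
    have hsplit := card_sdiff_add_card_inter S T
    omega

theorem exists_isBundle_disjoint {𝕜 : Type*} [Semiring 𝕜] [PartialOrder 𝕜] [IsStrictOrderedRing 𝕜]
    [Fintype A] [Fintype B] (hdisj : ∀ i i', Disjoint (B1 i) (Bε i')) {k : ℕ} (hr : 0 < r)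
    (hrk : 3 * r ≤ k + 2) {x : A → Finset B → 𝕜} (hx : ∀ i S, 0 ≤ x i S)
    (hsupp : ∀ i S, 0 < x i S → (S ⊆ B1 i ∧ S.Nonempty) ∨ (S ⊆ Bε i ∧ k ≤ #S))
    (hcov : ∀ i, 1 ≤ ∑ S, x i S) (hpack : ∀ j, ∑ i, ∑ S with j ∈ S, x i S ≤ 1)
    {C : Finset A} {T : Finset B}
    (hT : ∑ j ∈ T, itemWeight B1 r j + (2 * r - 1) ≤ #C * (2 * r - 1)) :
    ∃ i ∈ C, ∃ e, IsBundle B1 Bε r i e ∧ Disjoint e T := by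
  by_contra! hmeet
  have hcast : (#C : 𝕜) * ((2 * r - 1 : ℕ) : 𝕜) ≤ ∑ j ∈ T, (itemWeight B1 r j : 𝕜) :=
    card_mul_le_sum_of_le_sum_inter hx hpack (fun _ => Nat.cast_nonneg _) (Nat.cast_nonneg _)
      (fun i _ => hcov i) fun i hi S hS => mod_cast
        two_mul_sub_one_le_sum_itemWeight_inter hdisj hrk (hsupp i S hS) (hmeet i hi)
  have hle : #C * (2 * r - 1) ≤ ∑ j ∈ T, itemWeight B1 r j := mod_cast hcast
  omega

theorem hypergraph_perfect_matching_general {𝕜 : Type*} [Semiring 𝕜] [PartialOrder 𝕜]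
    [IsStrictOrderedRing 𝕜] [Fintype A] [Fintype B] (hdisj : ∀ i i', Disjoint (B1 i) (Bε i'))
    {k : ℕ} (hr : 0 < r) (hrk : 3 * r ≤ k + 2) {x : A → Finset B → 𝕜} (hx : ∀ i S, 0 ≤ x i S)
    (hsupp : ∀ i S, 0 < x i S → (S ⊆ B1 i ∧ S.Nonempty) ∨ (S ⊆ Bε i ∧ k ≤ #S))
    (hcov : ∀ i, 1 ≤ ∑ S, x i S) (hpack : ∀ j, ∑ i, ∑ S with j ∈ S, x i S ≤ 1) :
    ∃ S : A → Finset B, Pairwise (fun i i' => Disjoint (S i) (S i')) ∧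
      ∀ i, IsBundle B1 Bε r i (S i) := by
  obtain ⟨M, hM⟩ := exists_isMatchingOn (E := IsBundle B1 Bε r)
    (w := fun T => ∑ j ∈ T, itemWeight B1 r j) (q := 2 * r - 1) (D := univ) (by simp)
    (fun S T => sum_union_inter (s₁ := S) (s₂ := T) (f := itemWeight B1 r) ▸ le_self_add)
    (fun M N i e hM hN he hNe =>
      sum_itemWeight_union_biUnion_le hdisj hM.isEdge hN he hNe)
    (fun C T hT => exists_isBundle_disjoint hdisj hr hrk hx hsupp hcov hpack hT)
  exact ⟨M, fun i i' => hM.pairwiseDisjoint (mem_coe.2 (mem_univ i)) (mem_coe.2 (mem_univ i')),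
    fun i => hM.isEdge i (mem_univ i)⟩

end Bundle

theorem three_mul_ceil_div_three_le (k : ℕ) : 3 * ⌈(k : ℝ) / 3⌉₊ ≤ k + 2 := by
  have hlt : (⌈(k : ℝ) / 3⌉₊ : ℝ) < k / 3 + 1 := Nat.ceil_lt_add_one (by positivity)
  have hlt' : 3 * ⌈(k : ℝ) / 3⌉₊ < k + 3 := by
    exact_mod_cast (by linarith : (3 : ℝ) * ⌈(k : ℝ) / 3⌉₊ < k + 3)
  omega

/-- **Perfect matching in the bundle hypergraph.**
Items are partitioned into heavy and light (via the predicate `heavy`).  Given a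
fractional bundle assignment `x` whose support consists of nonempty heavy bundles
or light bundles of size at least `k`, satisfying the covering and packing
constraints, there is a system of pairwise disjoint bundles giving every agent
either a single heavy item of `B1 i` or `r = ⌈k/3⌉` light items of `Bε i`. -/
theorem hypergraph_perfect_matching
    {A B : Type*} [Fintype A] [Fintype B] [DecidableEq B]
    (heavy : B → Bool)
    (B1 Bε : A → Finset B)
    (hB1 : ∀ i, ∀ j ∈ B1 i, heavy j = true)
    (hBε : ∀ i, ∀ j ∈ Bε i, heavy j = false)
    (k r : ℕ) (hk : 1 ≤ k) (hr : r = ⌈(k : ℝ) / 3⌉₊)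
    (x : A → Finset B → ℝ)
    (hx0 : ∀ i S, 0 ≤ x i S)
    (hsupp : ∀ i S, 0 < x i S →
      (S ⊆ B1 i ∧ S.Nonempty) ∨ (S ⊆ Bε i ∧ k ≤ S.card))
    (hcov : ∀ i, 1 ≤ ∑ S : Finset B, x i S)
    (hpack : ∀ j : B,
      ∑ i : A, ∑ S ∈ Finset.univ.filter (fun S : Finset B => j ∈ S), x i S ≤ 1) :
    ∃ S : A → Finset B,
      (∀ i i', i ≠ i' → Disjoint (S i) (S i')) ∧
      (∀ i, (∃ j ∈ B1 i, S i = {j}) ∨ (S i ⊆ Bε i ∧ (S i).card = r)) := by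
  have hdisj : ∀ i i', Disjoint (B1 i) (Bε i') := fun i i' => disjoint_left.2 fun j hj hj' =>
    Bool.false_ne_true ((hBε i' j hj').symm.trans (hB1 i j hj))
  have hr_pos : 0 < r := hr ▸ Nat.ceil_pos.2 (by positivity)
  obtain ⟨S, hS, hbundle⟩ := hypergraph_perfect_matching_general hdisj hr_pos
    (hr ▸ three_mul_ceil_div_three_le k) hx0 hsupp hcov hpack
  exact ⟨S, fun _ _ h => hS h, hbundle⟩
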